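/- arXiv:2602.15390 — 2 statements merged into one kernel-verified Lean document; each statement's English description precedes it below -/
import Mathlib

section
/- Let d ≥ 1, let Λ ⊂ ℝ^d be a full-rank lattice with generating matrix T (an invertible matrix with Λ = Tℤ^d), and let Λ⊥ be its dual lattice. Then the mesh ratio of Λ satisfies ρ(Λ) ≤ C_d · min( √d · |det(T)| / (λ₁(Λ))^d , d · |det(T⁻¹)| / (λ₁(Λ⊥))^d ), where C_d = 2^d Γ(1+d/2)/π^{d/2} and Γ denotes the gamma function. -/
open scoped RealInnerProductSpace

noncomputable section

/-- `ℝ^d` with the Euclidean norm. -/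
abbrev Euc (d : ℕ) := EuclideanSpace ℝ (Fin d)

/-- `Λ` is the full-rank lattice generated by the columns of the invertible matrix `T`. -/
def IsLatticeOf {d : ℕ} (Λ : Set (Euc d)) (T : Matrix (Fin d) (Fin d) ℝ) : Prop :=
  IsUnit T.det ∧ Λ = { v : Euc d | ∃ k : Fin d → ℤ, ∀ i, v i = ∑ j, T i j * (k j : ℝ) }

/-- Covering radius of `Λ` with respect to all of `ℝ^d`:
`h(Λ) = sup_{x ∈ ℝ^d} inf_{y ∈ Λ} ‖x - y‖₂`. -/
def covRad {d : ℕ} (Λ : Set (Euc d)) : ℝ :=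
  ⨆ x : Euc d, sInf (Set.image (dist x) Λ)

/-- Separation radius of a lattice: half the length of the shortest nonzero vector. -/
def sepRad {d : ℕ} (Λ : Set (Euc d)) : ℝ :=
  (1 / 2) * sInf (Set.image norm (Λ \ {0}))

/-- Mesh ratio `ρ(Λ) = h(Λ)/q(Λ)` of a lattice. -/
def meshRatio {d : ℕ} (Λ : Set (Euc d)) : ℝ := covRad Λ / sepRad Λ

/-- The `j`-th successive minimum of `Λ` with respect to the Euclidean unit ball:
`λ_j(Λ) = inf { r > 0 : dim span(Λ ∩ rB_d) ≥ j }`. -/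
def succMin {d : ℕ} (Λ : Set (Euc d)) (j : ℕ) : ℝ :=
  sInf { r : ℝ | 0 < r ∧
    j ≤ Module.finrank ℝ (Submodule.span ℝ (Λ ∩ Metric.closedBall (0 : Euc d) r)) }

/-- The dual lattice `Λ⊥ = { y : x·y ∈ ℤ for all x ∈ Λ }`. -/
def dualLat {d : ℕ} (Λ : Set (Euc d)) : Set (Euc d) :=
  { y | ∀ x ∈ Λ, ∃ n : ℤ, ⟪x, y⟫ = (n : ℝ) }

/-- The closed unit cube `[0,1]^d`. -/
def unitCube (d : ℕ) : Set (Euc d) := { x | ∀ i, 0 ≤ x i ∧ x i ≤ 1 }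

/-- The half-open unit cube `[0,1)^d`. -/
def halfOpenCube (d : ℕ) : Set (Euc d) := { x | ∀ i, 0 ≤ x i ∧ x i < 1 }

/-- Covering radius of a point set `P` with respect to the unit cube `[0,1]^d`. -/
def covRadCube {d : ℕ} (P : Set (Euc d)) : ℝ :=
  ⨆ x : unitCube d, sInf (Set.image (dist (x : Euc d)) P)

/-- Separation radius of a point set:
`q(P) = (1/2) min_{x ≠ y ∈ P} ‖x - y‖₂`. -/
def sepRadSet {d : ℕ} (P : Set (Euc d)) : ℝ :=
  (1 / 2) * sInf { r : ℝ | ∃ x ∈ P, ∃ y ∈ P, x ≠ y ∧ r = dist x y }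

/-- Mesh ratio `ρ(P) = h(P)/q(P)` of a point set with respect to `[0,1]^d`. -/
def meshRatioSet {d : ℕ} (P : Set (Euc d)) : ℝ := covRadCube P / sepRadSet P

/-- The constant `C_d = 2^d Γ(1+d/2) / π^{d/2}`. -/
def Cd (d : ℕ) : ℝ := 2 ^ d * Real.Gamma (1 + (d : ℝ) / 2) / Real.pi ^ ((d : ℝ) / 2)

/-!
Rounding coordinates with respect to short independent lattice vectors gives
`h(Λ) ≤ √d / 2 * λ_d(Λ)`, hence `ρ(Λ) ≤ √d * λ_d(Λ) / λ₁(Λ)`. The quotient `λ_d / λ₁` is bounded by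
a weak form of Minkowski's second theorem, `vol(B) * λ₁ ^ (d - 1) * λ_d ≤ 2 ^ d * |det T|`: the
lattice vectors shorter than `λ_d` lie in a hyperplane, and stretching the unit ball by `λ₁` along
it and by `λ_d` across it yields an ellipsoid without nonzero lattice points in its interior, so
that the translates of its half by `Λ` do not overlap.

For the second bound, `1 / λ₁(Λ) ≤ λ_d(Λ⊥)`, and `h(Λ)` is bounded through `λ₁(Λ⊥)`: a point of
`ℝ^d` modulo `Λ` is a character of `Λ⊥`, which is made trivial on a shortest vector `y` of `Λ⊥` by
subtracting a small multiple of `y`; then project `Λ⊥` along `y` and recurse. A projection shortens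
the shortest vector by a factor of at least `√3 / 2`, so
`4 * λ₁(Λ⊥) ^ 2 * h(Λ) ^ 2 ≤ ∑ i < d, (4 / 3) ^ i`. In high dimension this sum exceeds the desired
`d ^ 2`, which is made up for in Minkowski's theorem by letting the translates be larger, with
radius `1 / √3` instead of `1 / 2`, and overlap at most twice.
-/

open MeasureTheory Module Metric
open scoped Matrix Topology

section Packing

theorem measure_le_mul_of_encard_le {G α : Type*} [AddGroup G] [AddAction G α]
    [MeasurableSpace α] {μ : Measure α} [MeasurableConstVAdd G α] [VAddInvariantMeasure G α μ]
    [Countable G] {F K : Set α} (hF : IsAddFundamentalDomain G F μ) (hK : MeasurableSet K) {p : ℕ}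
    (hp : ∀ x, {g : G | g +ᵥ x ∈ K}.encard ≤ p) : μ K ≤ p * μ F := by
  have orbit_count (x : α) :
      ∑' g : G, K.indicator 1 (g +ᵥ x) = (({g : G | g +ᵥ x ∈ K}.encard : ℕ∞) : ENNReal) := by
    rw [← ENNReal.tsum_set_one, tsum_subtype _ fun _ ↦ (1 : ENNReal)]
    rfl
  calc μ K = ∫⁻ x, K.indicator 1 x ∂μ := (lintegral_indicator_one hK).symm
    _ = ∑' g : G, ∫⁻ x in F, K.indicator 1 (g +ᵥ x) ∂μ := hF.lintegral_eq_tsum'' _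
    _ = ∫⁻ x in F, ∑' g : G, K.indicator 1 (g +ᵥ x) ∂μ :=
      (lintegral_tsum fun g ↦ ((measurable_one.indicator hK).comp
        (measurable_const_vadd g)).aemeasurable).symm
    _ ≤ ∫⁻ _ in F, p ∂μ := lintegral_mono fun x ↦ by
      rw [orbit_count]
      exact ENat.toENNReal_le.mpr (hp x)
    _ = p * μ F := setLIntegral_const F _

variable {E : Type*} [NormedAddCommGroup E] [InnerProductSpace ℝ E]

theorem sum_sum_norm_sub_sq_le {ι : Type*} (S : Finset ι) (x : ι → E) :
    ∑ i ∈ S, ∑ j ∈ S, ‖x i - x j‖ ^ 2 ≤ 2 * S.card * ∑ i ∈ S, ‖x i‖ ^ 2 := by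
  have expand : ∑ i ∈ S, ∑ j ∈ S, ‖x i - x j‖ ^ 2
      = 2 * S.card * ∑ i ∈ S, ‖x i‖ ^ 2 - 2 * ‖∑ i ∈ S, x i‖ ^ 2 := by
    rw [← real_inner_self_eq_norm_sq (∑ i ∈ S, x i)]
    simp only [norm_sub_sq_real, Finset.sum_add_distrib, Finset.sum_sub_distrib, sum_inner,
      inner_sum, ← Finset.mul_sum, Finset.sum_const, nsmul_eq_mul]
    rw [Finset.sum_comm (f := fun i j ↦ ⟪x j, x i⟫)]
    ring
  linarith [sq_nonneg ‖∑ i ∈ S, x i‖]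

/- By averaging, `p + 1` points at pairwise distance at least `1` have mean squared norm at least
`p / (2 * (p + 1))`. -/
theorem card_le_of_one_le_norm_sub {ι : Type*} {S : Finset ι} {x : ι → E} {s : ℝ} {p : ℕ}
    (hsep : (S : Set ι).Pairwise fun i j ↦ 1 ≤ ‖x i - x j‖) (hball : ∀ i ∈ S, ‖x i‖ < s)
    (hps : 2 * (p + 1) * s ^ 2 ≤ p) : S.card ≤ p := by
  classical
  by_contra! hcard
  obtain ⟨S', hS', hS'card⟩ := Finset.exists_subset_card_eq (Nat.succ_le_of_lt hcard)
  have hne : S'.Nonempty := Finset.card_pos.mp (by omega)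
  have lower : ((p : ℝ) + 1) * p ≤ ∑ i ∈ S', ∑ j ∈ S', ‖x i - x j‖ ^ 2 := by
    calc ((p : ℝ) + 1) * p = ∑ i ∈ S', ∑ _j ∈ S'.erase i, (1 : ℝ) := by
          rw [Finset.sum_congr rfl (g := fun _ ↦ (p : ℝ)) fun i hi ↦ by
            simp [Finset.card_erase_of_mem hi, hS'card]]
          simp [hS'card]
      _ ≤ ∑ i ∈ S', ∑ j ∈ S'.erase i, ‖x i - x j‖ ^ 2 := by
          gcongr with i hi _ hj
          obtain ⟨hji, hj⟩ := Finset.mem_erase.mp hj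
          exact one_le_pow₀ (hsep (hS' hi) (hS' hj) hji.symm)
      _ ≤ ∑ i ∈ S', ∑ j ∈ S', ‖x i - x j‖ ^ 2 := by
          gcongr
          exact Finset.erase_subset _ _
  have upper : ∑ i ∈ S', ‖x i‖ ^ 2 < (p + 1) * s ^ 2 := by
    calc ∑ i ∈ S', ‖x i‖ ^ 2 < ∑ i ∈ S', s ^ 2 := by
          gcongr with i hi
          exact hball i (hS' hi)
      _ = (p + 1) * s ^ 2 := by simp [hS'card]
  have average := sum_sum_norm_sub_sq_le S' x
  rw [hS'card, Nat.cast_succ] at average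
  have hp : (0 : ℝ) < p + 1 := by positivity
  nlinarith [mul_lt_mul_of_pos_left upper hp, mul_le_mul_of_nonneg_left hps hp.le]

variable {L : Submodule ℤ E}

theorem encard_vadd_mem_preimage_ball_le {A : E →ₗ[ℝ] E}
    (hsep : ∀ v ∈ L, v ≠ 0 → 1 ≤ ‖A v‖) {s : ℝ} {p : ℕ} (hps : 2 * (p + 1) * s ^ 2 ≤ p) (x : E) :
    {v : L | v +ᵥ x ∈ A ⁻¹' ball 0 s}.encard ≤ p := by
  by_contra! hlarge
  obtain ⟨S, hS, hcard⟩ := Set.exists_subset_encard_eq (Order.add_one_le_of_lt hlarge)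
  lift S to Finset L using Set.finite_of_encard_eq_coe (k := p + 1) (by exact_mod_cast hcard)
  have hcard : S.card = p + 1 := by
    rw [Set.encard_coe_eq_coe_finsetCard] at hcard
    exact_mod_cast hcard
  have hsep' : (S : Set L).Pairwise fun v w ↦ 1 ≤ ‖A (v +ᵥ x) - A (w +ᵥ x)‖ := by
    intro v _ w _ hvw
    have hdiff : (v +ᵥ x) - (w +ᵥ x) = ((v - w : L) : E) := by
      simp [Submodule.vadd_def]
    rw [← map_sub, hdiff]
    exact hsep _ (v - w).2 (by simpa [sub_eq_zero] using hvw)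
  have hle := card_le_of_one_le_norm_sub hsep' (fun v hv ↦ by simpa using hS hv) hps
  omega

variable [FiniteDimensional ℝ E] [MeasurableSpace E] [BorelSpace E] [DiscreteTopology L]
  [IsZLattice ℝ L]

theorem measureReal_le_mul_covolume {K : Set E} (hK : MeasurableSet K) {p : ℕ}
    (hp : ∀ x, {v : L | v +ᵥ x ∈ K}.encard ≤ p) :
    volume.real K ≤ p * ZLattice.covolume L := by
  have : MeasurableVAdd L E := inferInstanceAs (MeasurableVAdd L.toAddSubgroup E)
  have : VAddInvariantMeasure L E volume :=
    inferInstanceAs (VAddInvariantMeasure L.toAddSubgroup E volume)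
  have hF := ZLattice.isAddFundamentalDomain (Free.chooseBasis ℤ L) volume
  have hfin := (ZSpan.fundamentalDomain_isBounded
    ((Free.chooseBasis ℤ L).ofZLatticeBasis ℝ)).measure_lt_top (μ := volume)
  rw [ZLattice.covolume_eq_measure_fundamentalDomain L volume hF, measureReal_def, measureReal_def,
    ← ENNReal.toReal_natCast, ← ENNReal.toReal_mul]
  exact ENNReal.toReal_mono (ENNReal.mul_ne_top (by simp) hfin.ne)
    (measure_le_mul_of_encard_le hF hK hp)

theorem pow_mul_volume_ball_le_mul_covolume {A : E →ₗ[ℝ] E} (hA : LinearMap.det A ≠ 0)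
    (hsep : ∀ v ∈ L, v ≠ 0 → 1 ≤ ‖A v‖) {s : ℝ} (hs : 0 < s) {p : ℕ}
    (hps : 2 * (p + 1) * s ^ 2 ≤ p) :
    s ^ finrank ℝ E * volume.real (ball (0 : E) 1) ≤
      p * |LinearMap.det A| * ZLattice.covolume L := by
  have hvol : volume.real (A ⁻¹' ball 0 s) =
      |LinearMap.det A|⁻¹ * (s ^ finrank ℝ E * volume.real (ball (0 : E) 1)) := by
    simp only [measureReal_def]
    rw [Measure.addHaar_preimage_linearMap _ hA, Measure.addHaar_ball_of_pos _ _ hs, abs_inv,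
      ENNReal.toReal_mul, ENNReal.toReal_mul, ENNReal.toReal_ofReal (by positivity),
      ENNReal.toReal_ofReal (by positivity)]
  have hmeas : MeasurableSet (A ⁻¹' ball 0 s) :=
    measurableSet_ball.preimage A.continuous_of_finiteDimensional.measurable
  have hle := measureReal_le_mul_covolume hmeas (encard_vadd_mem_preimage_ball_le hsep hps)
  rwa [hvol, inv_mul_le_iff₀ (abs_pos.mpr hA), ← mul_assoc, mul_comm |_|] at hle

end Packing

section Minkowski

variable {E : Type*} [NormedAddCommGroup E] [InnerProductSpace ℝ E]

/-- The linear map which, for a unit vector `n`, scales the line `ℝ n` by `b` and its orthogonal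
complement by `a`. It enters Minkowski's second theorem by deforming the unit ball. -/
def stretch (n : E) (a b : ℝ) : E →ₗ[ℝ] E :=
  a • LinearMap.id + ((b - a) • innerₛₗ ℝ n).smulRight n

theorem stretch_apply (n v : E) (a b : ℝ) :
    stretch n a b v = a • v + ((b - a) * ⟪n, v⟫) • n := by
  simp [stretch]

theorem norm_stretch_sq {n : E} (hn : ‖n‖ = 1) (a b : ℝ) (v : E) :
    ‖stretch n a b v‖ ^ 2 = a ^ 2 * (‖v‖ ^ 2 - ⟪n, v⟫ ^ 2) + b ^ 2 * ⟪n, v⟫ ^ 2 := by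
  rw [stretch_apply, norm_add_sq_real, inner_smul_left, inner_smul_right, norm_smul, norm_smul, hn,
    real_inner_comm, mul_pow, mul_pow, Real.norm_eq_abs, Real.norm_eq_abs, sq_abs, sq_abs,
    conj_trivial]
  ring

theorem mul_norm_le_norm_stretch {n : E} (hn : ‖n‖ = 1) {a b c : ℝ} (hc : 0 ≤ c) (hca : c ≤ a)
    (hcb : c ≤ b) (v : E) : c * ‖v‖ ≤ ‖stretch n a b v‖ := by
  have hcs : ⟪n, v⟫ ^ 2 ≤ ‖v‖ ^ 2 := by
    rw [← sq_abs ⟪n, v⟫]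
    gcongr
    simpa [hn] using abs_real_inner_le_norm n v
  refine le_of_sq_le_sq ?_ (norm_nonneg _)
  calc (c * ‖v‖) ^ 2 = c ^ 2 * (‖v‖ ^ 2 - ⟪n, v⟫ ^ 2) + c ^ 2 * ⟪n, v⟫ ^ 2 := by ring
    _ ≤ a ^ 2 * (‖v‖ ^ 2 - ⟪n, v⟫ ^ 2) + b ^ 2 * ⟪n, v⟫ ^ 2 := by gcongr
    _ = ‖stretch n a b v‖ ^ 2 := (norm_stretch_sq hn a b v).symm

theorem norm_stretch_of_inner_eq_zero {n v : E} (h : ⟪n, v⟫ = 0) {a : ℝ} (ha : 0 ≤ a) (b : ℝ) :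
    ‖stretch n a b v‖ = a * ‖v‖ := by
  simp [stretch_apply, h, norm_smul, abs_of_nonneg ha]

theorem one_le_norm_stretch_of_forall_inner_eq_zero {L : Set E} {l M : ℝ} (hl : 0 < l) (hM : 0 < M)
    (hshort : ∀ v ∈ L, v ≠ 0 → l ≤ ‖v‖) {n : E} (hn : ‖n‖ = 1)
    (hperp : ∀ v ∈ L, ‖v‖ ≤ M → ⟪n, v⟫ = 0) {v : E} (hv : v ∈ L) (hv0 : v ≠ 0) :
    1 ≤ ‖stretch n l⁻¹ M⁻¹ v‖ := by
  have one_le_mul {r t : ℝ} (hr : 0 < r) (hrt : r ≤ t) : 1 ≤ r⁻¹ * t :=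
    (one_le_inv_mul₀ hr).mpr hrt
  rcases le_or_gt ‖v‖ M with hvM | hvM
  · rw [norm_stretch_of_inner_eq_zero (hperp v hv hvM) (by positivity)]
    exact one_le_mul hl (hshort v hv hv0)
  · rcases le_total l M with hlM | hMl
    · exact (one_le_mul hM hvM.le).trans
        (mul_norm_le_norm_stretch hn (by positivity) (by gcongr) le_rfl v)
    · exact (one_le_mul hl (hshort v hv hv0)).trans
        (mul_norm_le_norm_stretch hn (by positivity) le_rfl (by gcongr) v)

variable [FiniteDimensional ℝ E]

theorem det_stretch {n : E} (hn : ‖n‖ = 1) {a : ℝ} (ha : a ≠ 0) (b : ℝ) :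
    LinearMap.det (stretch n a b) = a ^ finrank ℝ E * (b / a) := by
  have hfactor : stretch n a b = a • LinearMap.transvection (innerₛₗ ℝ n) ((b / a - 1) • n) := by
    ext v
    simp only [stretch_apply, LinearMap.smul_apply, LinearMap.transvection.apply,
      innerₛₗ_apply_apply, smul_add, smul_smul]
    congr 2
    field_simp
  rw [hfactor, LinearMap.det_smul, LinearMap.transvection.det, map_smul, innerₛₗ_apply_apply,
    real_inner_self_eq_norm_sq, hn]
  simp

theorem exists_norm_eq_one_forall_inner_eq_zero {V : Submodule ℝ E} (hV : V ≠ ⊤) :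
    ∃ n : E, ‖n‖ = 1 ∧ ∀ v ∈ V, ⟪n, v⟫ = 0 := by
  obtain ⟨w, hw, hw0⟩ := Submodule.exists_mem_ne_zero_of_ne_bot
    (mt (Submodule.orthogonal_eq_bot_iff (K := V)).mp hV)
  refine ⟨(‖w‖⁻¹ : ℝ) • w, norm_smul_inv_norm hw0, fun v hv ↦ ?_⟩
  rw [inner_smul_left, V.inner_left_of_mem_orthogonal hv hw, mul_zero]

variable [MeasurableSpace E] [BorelSpace E] {L : Submodule ℤ E} [DiscreteTopology L]
  [IsZLattice ℝ L]

theorem pow_mul_volume_ball_mul_le_of_span_ne_top {l M : ℝ} (hl : 0 < l) (hM : 0 < M)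
    (hshort : ∀ v ∈ L, v ≠ 0 → l ≤ ‖v‖)
    (hspan : Submodule.span ℝ (L ∩ closedBall (0 : E) M) ≠ ⊤) {s : ℝ} (hs : 0 < s) {p : ℕ}
    (hps : 2 * (p + 1) * s ^ 2 ≤ p) :
    s ^ finrank ℝ E * volume.real (ball (0 : E) 1) * (l ^ (finrank ℝ E - 1) * M) ≤
      p * ZLattice.covolume L := by
  obtain ⟨n, hn, hperp⟩ := exists_norm_eq_one_forall_inner_eq_zero hspan
  have : Nontrivial E := ⟨n, 0, fun h ↦ by simp [h] at hn⟩
  have hdet : LinearMap.det (stretch n l⁻¹ M⁻¹) = (l ^ (finrank ℝ E - 1) * M)⁻¹ := by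
    rw [det_stretch hn (by positivity), ← mul_pow_sub_one finrank_pos.ne' l⁻¹, inv_pow]
    field_simp
  have hle := pow_mul_volume_ball_le_mul_covolume (L := L) (A := stretch n l⁻¹ M⁻¹)
    (by rw [hdet]; positivity) (fun v hv hv0 ↦ one_le_norm_stretch_of_forall_inner_eq_zero hl hM
      hshort hn (fun w hw hwM ↦ hperp w (Submodule.subset_span ⟨hw, by simpa using hwM⟩)) hv hv0)
    hs hps
  rwa [hdet, abs_of_pos (by positivity), mul_right_comm, ← div_eq_mul_inv,
    le_div_iff₀ (by positivity)] at hle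

end Minkowski

section NearestPlane

variable {E : Type*} [NormedAddCommGroup E] [InnerProductSpace ℝ E]

/- Babai's nearest plane algorithm: round one coordinate, then recurse on the projection to the span
of the remaining vectors. -/
theorem exists_mem_span_int_norm_sub_sq_le (S : Finset E) {x : E}
    (hx : x ∈ Submodule.span ℝ (S : Set E)) :
    ∃ u ∈ Submodule.span ℤ (S : Set E), ‖x - u‖ ^ 2 ≤ (∑ v ∈ S, ‖v‖ ^ 2) / 4 := by
  classical
  induction S using Finset.induction_on generalizing x with
  | empty => exact ⟨0, zero_mem _, by simpa using hx⟩
  | insert v S hvS ih =>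
    set V := Submodule.span ℝ (S : Set E)
    rw [Finset.coe_insert, Submodule.mem_span_insert] at hx
    obtain ⟨a, z, hz, rfl⟩ := hx
    set w := (a - round a) • v
    have hproj : V.starProjection w + z ∈ V :=
      V.add_mem (V.starProjection_apply_mem w) hz
    obtain ⟨u, hu, hnear⟩ := ih hproj
    have huV : u ∈ V := Submodule.span_subset_span ℤ ℝ _ hu
    have hsplit : a • v + z - (round a • v + u)
        = (V.starProjection w + z - u) + (w - V.starProjection w) := by
      rw [← Int.cast_smul_eq_zsmul ℝ (round a) v]
      simp only [w]
      module
    refine ⟨round a • v + u, ?_, ?_⟩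
    · rw [Finset.coe_insert, Submodule.mem_span_insert]
      exact ⟨round a, u, hu, rfl⟩
    · have horth : ‖w - V.starProjection w‖ ^ 2 ≤ ‖v‖ ^ 2 / 4 := by
        have h := V.norm_sq_eq_add_norm_sq_starProjection w
        rw [V.starProjection_orthogonal_val] at h
        have hw : ‖w‖ ≤ 1 / 2 * ‖v‖ := by
          rw [norm_smul, Real.norm_eq_abs]
          gcongr
          exact abs_sub_round a
        nlinarith [norm_nonneg w, sq_nonneg ‖V.starProjection w‖]
      rw [hsplit, norm_add_sq_real, V.inner_right_of_mem_orthogonal (V.sub_mem hproj huV)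
        (V.sub_starProjection_mem_orthogonal w), Finset.sum_insert hvS]
      linarith

theorem exists_mem_norm_sub_sq_le_of_span_eq_top [FiniteDimensional ℝ E] {L : Submodule ℤ E} {M : ℝ}
    (hspan : Submodule.span ℝ (L ∩ closedBall (0 : E) M) = ⊤) (x : E) :
    ∃ u ∈ L, ‖x - u‖ ^ 2 ≤ finrank ℝ E * M ^ 2 / 4 := by
  classical
  obtain ⟨b, hb, hbspan, -⟩ :=
    Submodule.exists_fun_fin_finrank_span_eq ℝ (L ∩ closedBall (0 : E) M)
  set S : Finset E := Finset.univ.image b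
  have hcoe : (S : Set E) = Set.range b := by simp [S]
  have hcard : S.card ≤ finrank ℝ E :=
    Finset.card_image_le.trans (by simpa using Submodule.finrank_le _)
  obtain ⟨u, hu, hnear⟩ := exists_mem_span_int_norm_sub_sq_le S (x := x)
    (by simp [hcoe, hbspan, hspan])
  refine ⟨u, Submodule.span_le.mpr ?_ hu, hnear.trans ?_⟩
  · rw [hcoe]
    exact Set.range_subset_iff.mpr fun i ↦ (hb i).1
  · have hM : ∀ v ∈ S, ‖v‖ ^ 2 ≤ M ^ 2 := by
      rintro v hv
      obtain ⟨i, -, rfl⟩ := Finset.mem_image.mp hv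
      have := mem_closedBall_zero_iff.mp (hb i).2
      gcongr
    calc (∑ v ∈ S, ‖v‖ ^ 2) / 4 ≤ S.card * M ^ 2 / 4 := by
          gcongr
          simpa using Finset.sum_le_card_nsmul S _ _ hM
      _ ≤ finrank ℝ E * M ^ 2 / 4 := by gcongr

end NearestPlane

section Transference

theorem exists_shortest {E : Type*} [NormedAddCommGroup E] [ProperSpace E] (S : AddSubgroup E)
    [DiscreteTopology S] (hS : S ≠ ⊥) :
    ∃ v ∈ S, v ≠ 0 ∧ ∀ w ∈ S, w ≠ 0 → ‖v‖ ≤ ‖w‖ := by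
  obtain ⟨w, hwS, hw0⟩ := S.bot_or_exists_ne_zero.resolve_left hS
  have hfin : (closedBall (0 : E) ‖w‖ ∩ S).Finite :=
    Metric.finite_isBounded_inter_isClosed ⟨‹_›⟩ isBounded_closedBall
      AddSubgroup.isClosed_of_discrete
  have hw : w ∈ (closedBall (0 : E) ‖w‖ ∩ S) \ {0} := ⟨⟨by simp, hwS⟩, hw0⟩
  obtain ⟨v, ⟨⟨hvw, hvS⟩, hv0⟩, hmin⟩ := Set.exists_min_image _ norm hfin.sdiff ⟨w, hw⟩
  refine ⟨v, hvS, hv0, fun u huS hu0 ↦ ?_⟩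
  rcases le_total ‖u‖ ‖w‖ with huw | hwu
  · exact hmin u ⟨⟨by simpa using huw, huS⟩, hu0⟩
  · exact (mem_closedBall_zero_iff.mp hvw).trans hwu

variable {E : Type*} [NormedAddCommGroup E] [InnerProductSpace ℝ E]

/-- The character `v ↦ ⟪x, v⟫ mod 1` of `E`; every character of a lattice is the restriction of one
of these, and `x` lies in the dual lattice exactly when `innerChar x` is trivial on the lattice. -/
def innerChar (x : E) : E →+ UnitAddCircle :=
  (QuotientAddGroup.mk' _).comp (innerₛₗ ℝ x).toAddMonoidHom

theorem innerChar_apply (x v : E) : innerChar x v = (⟪x, v⟫ : ℝ) := rfl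

theorem innerChar_add_apply (x y v : E) : innerChar (x + y) v = innerChar x v + innerChar y v := by
  simp [innerChar_apply, inner_add_left]

theorem innerChar_orthogonalProjectionOnto {W : Submodule ℝ E} [W.HasOrthogonalProjection] (x : W)
    (v : E) : innerChar x (W.orthogonalProjectionOnto v) = innerChar (x : E) v := by
  rw [innerChar_apply, innerChar_apply, Submodule.inner_orthogonalProjectionOnto_eq_of_mem_left]

theorem mem_zmultiples_or_le_norm_orthogonalProjectionOnto_sq {S : AddSubgroup E} {y w : E}
    (hy : y ∈ S) (hmin : ∀ v ∈ S, v ≠ 0 → ‖y‖ ≤ ‖v‖) (hw : w ∈ S) :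
    w ∈ AddSubgroup.zmultiples y ∨
      3 / 4 * ‖y‖ ^ 2 ≤ ‖(ℝ ∙ y)ᗮ.orthogonalProjectionOnto w‖ ^ 2 := by
  set c : ℝ := ⟪y, w⟫ / ‖y‖ ^ 2
  set v := w - round c • y
  by_cases hv : v = 0
  · exact Or.inl ⟨round c, (sub_eq_zero.mp hv).symm⟩
  right
  have hyv : ‖y‖ ≤ ‖v‖ := hmin v (S.sub_mem hw (S.zsmul_mem hy _)) hv
  have hproj : (ℝ ∙ y)ᗮ.orthogonalProjectionOnto v = (ℝ ∙ y)ᗮ.orthogonalProjectionOnto w := by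
    rw [map_sub, map_zsmul, Submodule.orthogonalProjectionOnto_orthogonal_apply_eq_zero
      (Submodule.mem_span_singleton_self y), smul_zero, sub_zero]
  have hline : ‖(ℝ ∙ y).starProjection v‖ ≤ 1 / 2 * ‖y‖ := by
    have : (ℝ ∙ y).starProjection v = (c - round c) • y := by
      rw [map_sub, map_zsmul, Submodule.starProjection_singleton,
        Submodule.starProjection_eq_self_iff.mpr (Submodule.mem_span_singleton_self y), sub_smul,
        Int.cast_smul_eq_zsmul]
      rfl
    rw [this, norm_smul, Real.norm_eq_abs]
    gcongr
    exact abs_sub_round c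
  have hsplit := (ℝ ∙ y).norm_sq_eq_add_norm_sq_projection v
  rw [hproj] at hsplit
  change ‖v‖ ^ 2 = ‖(ℝ ∙ y).starProjection v‖ ^ 2 + _ at hsplit
  nlinarith [norm_nonneg y, norm_nonneg ((ℝ ∙ y).starProjection v)]

theorem exists_mem_span_singleton_innerChar_eq {y : E} (hy : y ≠ 0) (θ : UnitAddCircle) :
    ∃ e ∈ ℝ ∙ y, innerChar e y = θ ∧ ‖e‖ ^ 2 ≤ 1 / (4 * ‖y‖ ^ 2) := by
  obtain ⟨r, rfl⟩ := QuotientAddGroup.mk_surjective θ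
  have hy' : 0 < ‖y‖ := norm_pos_iff.mpr hy
  set t := r - round r
  have ht : t ^ 2 ≤ 1 / 4 := by
    rw [← sq_abs]
    nlinarith [abs_sub_round r, abs_nonneg t]
  refine ⟨(t / ‖y‖ ^ 2) • y, Submodule.smul_mem _ _ (Submodule.mem_span_singleton_self y), ?_, ?_⟩
  · have hinner : ⟪(t / ‖y‖ ^ 2) • y, y⟫ = t := by
      rw [real_inner_smul_left, real_inner_self_eq_norm_sq]
      field_simp
    rw [innerChar_apply, hinner]
    have hround : ((round r : ℝ) : UnitAddCircle) = 0 :=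
      (AddCircle.coe_eq_zero_iff 1).mpr ⟨round r, by simp⟩
    rw [AddCircle.coe_sub, hround, sub_zero]
  · rw [norm_smul, mul_pow, Real.norm_eq_abs, sq_abs]
    field_simp
    linarith

section Descent

variable {G : Type*} [AddCommGroup G] {f : G →+ E} {χ : G →+ UnitAddCircle}

theorem innerChar_zero_comp_eq (hker : f.ker ≤ χ.ker) (hf : f.range = ⊥) :
    (innerChar 0).comp f = χ := by
  ext g
  have hg : g ∈ χ.ker := hker (by simp [(AddMonoidHom.range_eq_bot_iff).mp hf])
  rw [AddMonoidHom.mem_ker.mp hg]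
  simp [innerChar_apply]

theorem exists_shortest_apply [FiniteDimensional ℝ E] (hf : f.range ≠ ⊥) {m : ℝ} (hm : 0 < m)
    (hsep : ∀ g, f g ≠ 0 → m ≤ ‖f g‖ ^ 2) :
    ∃ g₀, f g₀ ≠ 0 ∧ ∀ v ∈ f.range, v ≠ 0 → ‖f g₀‖ ≤ ‖v‖ := by
  have : ProperSpace E := FiniteDimensional.proper ℝ E
  have : DiscreteTopology f.range := by
    refine .of_forall_le_dist (Real.sqrt_pos.mpr hm) ?_
    rintro ⟨_, g, rfl⟩ ⟨_, h, rfl⟩ hgh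
    rw [Subtype.dist_eq, dist_eq_norm, ← map_sub]
    exact Real.sqrt_le_iff.mpr ⟨norm_nonneg _, hsep _ fun h ↦
      hgh (Subtype.ext (sub_eq_zero.mp (by rwa [← map_sub])))⟩
  obtain ⟨_, ⟨g₀, rfl⟩, h0, hmin⟩ := exists_shortest f.range hf
  exact ⟨g₀, h0, hmin⟩

theorem innerChar_apply_eq_of_projection_eq_zero {g₀ : G} (h0 : f g₀ ≠ 0)
    (hmin : ∀ v ∈ f.range, v ≠ 0 → ‖f g₀‖ ≤ ‖v‖) (hker : f.ker ≤ χ.ker) {e : E}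
    (he : innerChar e (f g₀) = χ g₀) {g : G}
    (hg : (ℝ ∙ f g₀)ᗮ.orthogonalProjectionOnto (f g) = 0) : innerChar e (f g) = χ g := by
  rcases mem_zmultiples_or_le_norm_orthogonalProjectionOnto_sq (S := f.range) ⟨g₀, rfl⟩ hmin
      ⟨g, rfl⟩
    with ⟨k, hk⟩ | hlarge
  · have hdiff : g - k • g₀ ∈ χ.ker := hker (by simp [AddMonoidHom.mem_ker, ← hk])
    rw [AddMonoidHom.mem_ker, map_sub, map_zsmul, sub_eq_zero] at hdiff
    rw [← hk, hdiff, ← he, map_zsmul]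
  · have := norm_pos_iff.mpr h0
    rw [hg, norm_zero] at hlarge
    nlinarith

theorem le_norm_projection_sq {g₀ : G} (hmin : ∀ v ∈ f.range, v ≠ 0 → ‖f g₀‖ ≤ ‖v‖) {g : G}
    (hg : (ℝ ∙ f g₀)ᗮ.orthogonalProjectionOnto (f g) ≠ 0) :
    3 / 4 * ‖f g₀‖ ^ 2 ≤ ‖(ℝ ∙ f g₀)ᗮ.orthogonalProjectionOnto (f g)‖ ^ 2 := by
  refine (mem_zmultiples_or_le_norm_orthogonalProjectionOnto_sq (S := f.range) ⟨g₀, rfl⟩ hmin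
    ⟨g, rfl⟩).resolve_left ?_
  rintro ⟨k, hk⟩
  refine hg (Submodule.orthogonalProjectionOnto_orthogonal_apply_eq_zero ?_)
  exact hk ▸ zsmul_mem (Submodule.mem_span_singleton_self _) k

end Descent

theorem exists_innerChar_comp_eq [FiniteDimensional ℝ E] {G : Type*} [AddCommGroup G]
    {f : G →+ E} {χ : G →+ UnitAddCircle} (hker : f.ker ≤ χ.ker) {m : ℝ} (hm : 0 < m)
    (hsep : ∀ g, f g ≠ 0 → m ≤ ‖f g‖ ^ 2) {n : ℕ} (hn : finrank ℝ E = n) :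
    ∃ e : E, (innerChar e).comp f = χ ∧
      ‖e‖ ^ 2 ≤ (∑ i ∈ Finset.range n, (4 / 3 : ℝ) ^ i) / (4 * m) := by
  induction n generalizing E m χ with
  | zero =>
    have : Subsingleton E := finrank_zero_iff.mp hn
    exact ⟨0, innerChar_zero_comp_eq hker (Subsingleton.elim _ _), by simp⟩
  | succ n ih =>
    by_cases hf : f.range = ⊥
    · refine ⟨0, innerChar_zero_comp_eq hker hf, ?_⟩
      rw [norm_zero, zero_pow two_ne_zero]
      positivity
    obtain ⟨g₀, h0, hmin⟩ := exists_shortest_apply hf hm hsep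
    obtain ⟨e₀, he₀, hχ₀, hnorm₀⟩ := exists_mem_span_singleton_innerChar_eq h0 (χ g₀)
    set W := (ℝ ∙ f g₀)ᗮ
    have : Fact (finrank ℝ E = n + 1) := ⟨hn⟩
    obtain ⟨e₁, hχ₁, hnorm₁⟩ := ih (f := W.orthogonalProjectionOnto.toAddMonoidHom.comp f)
      (χ := χ - (innerChar e₀).comp f) (m := 3 / 4 * m)
      (fun g hg ↦ sub_eq_zero.mpr
        (innerChar_apply_eq_of_projection_eq_zero h0 hmin hker hχ₀ hg).symm)
      (by positivity)
      (fun g hg ↦ (mul_le_mul_of_nonneg_left (hsep g₀ h0) (by norm_num)).trans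
        (le_norm_projection_sq hmin hg))
      (Submodule.finrank_orthogonal_span_singleton h0)
    refine ⟨e₀ + e₁, ?_, ?_⟩
    · ext g
      have hg : innerChar e₁ (W.orthogonalProjectionOnto (f g)) = χ g - innerChar e₀ (f g) :=
        DFunLike.congr_fun hχ₁ g
      rw [AddMonoidHom.comp_apply, innerChar_add_apply, ← innerChar_orthogonalProjectionOnto e₁, hg,
        add_sub_cancel]
    · have hnorm₀' : ‖e₀‖ ^ 2 ≤ 1 / (4 * m) := hnorm₀.trans (by gcongr; exact hsep g₀ h0)
      calc ‖e₀ + e₁‖ ^ 2 = ‖e₀‖ ^ 2 + ‖e₁‖ ^ 2 := by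
            rw [norm_add_sq_real, Submodule.inner_right_of_mem_orthogonal he₀ e₁.2, mul_zero,
              add_zero, Submodule.coe_norm]
        _ ≤ 1 / (4 * m) + (∑ i ∈ Finset.range n, (4 / 3 : ℝ) ^ i) / (4 * (3 / 4 * m)) := by gcongr
        _ = (∑ i ∈ Finset.range (n + 1), (4 / 3 : ℝ) ^ i) / (4 * m) := by
            rw [geom_sum_succ]
            field_simp
            ring

theorem exists_forall_inner_sub_eq_intCast [FiniteDimensional ℝ E] {S : AddSubgroup E} {l : ℝ}
    (hl : 0 < l) (hshort : ∀ v ∈ S, v ≠ 0 → l ≤ ‖v‖) (x : E) :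
    ∃ e : E, (∀ v ∈ S, ∃ n : ℤ, ⟪v, x - e⟫ = n) ∧
      ‖e‖ ^ 2 ≤ (∑ i ∈ Finset.range (finrank ℝ E), (4 / 3 : ℝ) ^ i) / (4 * l ^ 2) := by
  have hker : S.subtype.ker ≤ ((innerChar x).comp S.subtype).ker := by simp
  obtain ⟨e, he, hnorm⟩ := exists_innerChar_comp_eq hker (pow_pos hl 2) (fun v hv ↦ by
    have := hshort v v.2 hv
    simp only [AddSubgroup.subtype_apply]
    gcongr) rfl
  refine ⟨e, fun v hv ↦ ?_, hnorm⟩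
  have hchar : innerChar (x - e) v = 0 := by
    have hv' : innerChar e v = innerChar x v := DFunLike.congr_fun he ⟨v, hv⟩
    have hadd := innerChar_add_apply (x - e) e v
    rwa [sub_add_cancel, hv', right_eq_add] at hadd
  rw [innerChar_apply] at hchar
  obtain ⟨n, hn⟩ := (AddCircle.coe_eq_zero_iff 1).mp hchar
  exact ⟨n, by rw [real_inner_comm, ← hn, zsmul_one]⟩

theorem one_le_norm_mul_of_span_eq_top {S : Set E} {v : E} (hv : v ≠ 0)
    (hint : ∀ w ∈ S, ∃ n : ℤ, ⟪v, w⟫ = n) {r : ℝ}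
    (hspan : Submodule.span ℝ (S ∩ closedBall (0 : E) r) = ⊤) : 1 ≤ ‖v‖ * r := by
  by_contra! hlt
  have hperp : S ∩ closedBall (0 : E) r ⊆ (innerₛₗ ℝ v).ker := by
    rintro w ⟨hwS, hwr⟩
    obtain ⟨n, hn⟩ := hint w hwS
    have habs : |(n : ℝ)| < 1 := by
      rw [← hn]
      refine (abs_real_inner_le_norm v w).trans_lt (lt_of_le_of_lt ?_ hlt)
      gcongr
      exact mem_closedBall_zero_iff.mp hwr
    have hn0 : n = 0 := Int.abs_lt_one_iff.mp (by exact_mod_cast habs)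
    simp [hn, hn0]
  have hvker : v ∈ (innerₛₗ ℝ v).ker :=
    Submodule.span_le.mpr hperp (hspan ▸ Submodule.mem_top)
  exact hv (inner_self_eq_zero.mp hvker)

end Transference

section Lattice

variable {d : ℕ} {Λ : Set (Euc d)} {T : Matrix (Fin d) (Fin d) ℝ}

theorem IsLatticeOf.mem_iff (hT : IsLatticeOf Λ T) {v : Euc d} :
    v ∈ Λ ↔ ∃ k : Fin d → ℤ, v.ofLp = T.mulVec fun j ↦ (k j : ℝ) := by
  rw [hT.2]
  exact exists_congr fun k ↦ funext_iff.symm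

theorem inner_eq_dotProduct (x y : Euc d) : ⟪x, y⟫ = x.ofLp ⬝ᵥ y.ofLp := by
  rw [EuclideanSpace.inner_eq_star_dotProduct, dotProduct_comm, star_trivial]

theorem IsLatticeOf.mem_dualLat_iff (hT : IsLatticeOf Λ T) {y : Euc d} :
    y ∈ dualLat Λ ↔ ∃ k : Fin d → ℤ, Tᵀ.mulVec y.ofLp = fun j ↦ (k j : ℝ) := by
  constructor
  · intro hy
    have hcol (j : Fin d) : ∃ n : ℤ, Tᵀ.mulVec y.ofLp j = n := by
      have hmem : WithLp.toLp 2 (T.col j) ∈ Λ :=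
        hT.mem_iff.mpr ⟨Pi.single j 1, by ext i; simp [Matrix.mulVec, dotProduct, Pi.single_apply]⟩
      obtain ⟨n, hn⟩ := hy _ hmem
      exact ⟨n, by rw [← hn, inner_eq_dotProduct]; rfl⟩
    choose k hk using hcol
    exact ⟨k, funext hk⟩
  · rintro ⟨k, hk⟩ x hx
    obtain ⟨l, hl⟩ := hT.mem_iff.mp hx
    refine ⟨∑ j, k j * l j, ?_⟩
    rw [inner_eq_dotProduct, hl, dotProduct_comm, Matrix.dotProduct_mulVec,
      ← Matrix.mulVec_transpose, hk]
    simp [dotProduct]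

theorem IsLatticeOf.dual (hT : IsLatticeOf Λ T) : IsLatticeOf (dualLat Λ) (T⁻¹)ᵀ := by
  have hTt : IsUnit Tᵀ.det := by simpa using hT.1
  refine ⟨by simpa using T.isUnit_nonsing_inv_det hT.1, Set.ext fun y ↦ ?_⟩
  rw [hT.mem_dualLat_iff, Matrix.transpose_nonsing_inv]
  refine exists_congr fun k ↦ ?_
  change _ ↔ ∀ i, y.ofLp i = (Tᵀ⁻¹.mulVec fun j ↦ (k j : ℝ)) i
  rw [← funext_iff]
  constructor <;> rintro hk
  · rw [← hk, Matrix.mulVec_mulVec, Matrix.nonsing_inv_mul _ hTt, Matrix.one_mulVec]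
  · rw [hk, Matrix.mulVec_mulVec, Matrix.mul_nonsing_inv _ hTt, Matrix.one_mulVec]

theorem IsLatticeOf.dualLat_dualLat (hT : IsLatticeOf Λ T) : dualLat (dualLat Λ) = Λ := by
  have hinv : ((T⁻¹)ᵀ⁻¹)ᵀ = T := by
    rw [← Matrix.transpose_nonsing_inv, Matrix.transpose_transpose, T.nonsing_inv_nonsing_inv hT.1]
  rw [hT.dual.dual.2, hinv, ← hT.2]

theorem IsLatticeOf.exists_basis (hT : IsLatticeOf Λ T) : ∃ b : Basis (Fin d) ℝ (Euc d),
    Λ = Submodule.span ℤ (Set.range b) ∧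
      ZLattice.covolume (Submodule.span ℤ (Set.range b)) = |T.det| := by
  set b₀ := EuclideanSpace.basisFun (Fin d) ℝ
  set b := b₀.toBasis.map (Matrix.toLinearEquiv b₀.toBasis T hT.1)
  have hb (j : Fin d) : b j = WithLp.toLp 2 (T.col j) := by
    ext i
    rw [Basis.map_apply, Matrix.toLinearEquiv_apply, Matrix.toLin_self]
    simp [b₀, Pi.single_apply]
  refine ⟨b, ?_, ?_⟩
  · ext v
    rw [hT.mem_iff, SetLike.mem_coe, Submodule.mem_span_range_iff_exists_fun]
    refine exists_congr fun k ↦ ?_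
    rw [eq_comm, ← (WithLp.ofLp_injective 2).eq_iff]
    have hsum : (∑ j, k j • b j).ofLp = T.mulVec fun j ↦ (k j : ℝ) := by
      ext i
      simp [hb, Matrix.mulVec, dotProduct, mul_comm]
    rw [hsum]
  · have hpar : volume.real (parallelepiped b₀) = 1 := by
      rw [measureReal_def, b₀.volume_parallelepiped, ENNReal.toReal_one]
    rw [ZLattice.covolume_eq_det_mul_measureReal _ _ (b.restrictScalars ℤ) b₀.toBasis,
      measureReal_congr (ZSpan.fundamentalDomain_ae_parallelepiped b₀.toBasis volume),
      b₀.coe_toBasis, hpar, mul_one]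
    have hmap : ((↑) ∘ b.restrictScalars ℤ : Fin d → Euc d) =
        Matrix.toLin b₀.toBasis b₀.toBasis T ∘ b₀.toBasis := by
      ext1 j
      simp only [Function.comp_apply, Basis.restrictScalars_apply]
      rfl
    rw [hmap, Basis.det_comp, Basis.det_self, mul_one, LinearMap.det_toLin]

end Lattice

section SuccessiveMinima

variable {d : ℕ}

theorem succMin_le {Λ : Set (Euc d)} {j : ℕ} {r : ℝ} (hr : 0 < r)
    (hj : j ≤ finrank ℝ (Submodule.span ℝ (Λ ∩ closedBall (0 : Euc d) r))) : succMin Λ j ≤ r :=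
  csInf_le ⟨0, fun _ h ↦ h.1.le⟩ ⟨hr, hj⟩

theorem succMin_nonneg (Λ : Set (Euc d)) (j : ℕ) : 0 ≤ succMin Λ j :=
  Real.sInf_nonneg fun _ h ↦ h.1.le

theorem one_le_finrank_span_inter_closedBall_iff {Λ : Set (Euc d)} {r : ℝ} :
    1 ≤ finrank ℝ (Submodule.span ℝ (Λ ∩ closedBall (0 : Euc d) r)) ↔
      ∃ v ∈ Λ, v ≠ 0 ∧ ‖v‖ ≤ r := by
  rw [Submodule.one_le_finrank_iff, Ne, Submodule.span_eq_bot]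
  push Not
  exact exists_congr fun v ↦ by simp [and_assoc, and_comm]

theorem succMin_one_le_norm {Λ : Set (Euc d)} {v : Euc d} (hv : v ∈ Λ) (hv0 : v ≠ 0) :
    succMin Λ 1 ≤ ‖v‖ :=
  succMin_le (norm_pos_iff.mpr hv0)
    (one_le_finrank_span_inter_closedBall_iff.mpr ⟨v, hv, hv0, le_rfl⟩)

theorem span_inter_closedBall_ne_top_of_lt_succMin {Λ : Set (Euc d)} {r : ℝ} (hr : 0 < r)
    (hlt : r < succMin Λ d) : Submodule.span ℝ (Λ ∩ closedBall (0 : Euc d) r) ≠ ⊤ := by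
  intro hspan
  exact hlt.not_ge (succMin_le hr (by rw [hspan, finrank_top, finrank_euclideanSpace_fin]))

theorem covRad_le {Λ : Set (Euc d)} {R : ℝ} (hR : ∀ x : Euc d, ∃ u ∈ Λ, ‖x - u‖ ≤ R) :
    covRad Λ ≤ R := by
  refine ciSup_le fun x ↦ ?_
  obtain ⟨u, hu, hxu⟩ := hR x
  refine (csInf_le ⟨0, ?_⟩ (Set.mem_image_of_mem (dist x) hu)).trans (dist_eq_norm x u ▸ hxu)
  rintro _ ⟨y, -, rfl⟩
  exact dist_nonneg

variable (L : Submodule ℤ (Euc d)) [DiscreteTopology L] [IsZLattice ℝ L]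

theorem exists_norm_eq_succMin_one [NeZero d] : ∃ v ∈ L, v ≠ 0 ∧ ‖v‖ = succMin (d := d) L 1 := by
  have : DiscreteTopology L.toAddSubgroup := ‹DiscreteTopology L›
  have hL : L.toAddSubgroup ≠ ⊥ := by
    intro h
    have hspan := IsZLattice.span_top (K := ℝ) (L := L)
    have hbot : (L : Set (Euc d)) = {0} := congrArg SetLike.coe h
    rw [hbot, Submodule.span_zero_singleton] at hspan
    exact bot_ne_top hspan
  obtain ⟨v, hv, hv0, hmin⟩ := exists_shortest L.toAddSubgroup hL
  refine ⟨v, hv, hv0, le_antisymm ?_ (succMin_one_le_norm hv hv0)⟩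
  rw [succMin]
  refine le_csInf (Set.nonempty_of_mem (x := ‖v‖) ⟨norm_pos_iff.mpr hv0, ?_⟩) ?_
  · exact one_le_finrank_span_inter_closedBall_iff.mpr ⟨v, hv, hv0, le_rfl⟩
  · rintro r ⟨-, hr⟩
    obtain ⟨w, hw, hw0, hwr⟩ := one_le_finrank_span_inter_closedBall_iff.mp hr
    exact (hmin w hw hw0).trans hwr

theorem succMin_one_pos [NeZero d] : 0 < succMin (d := d) L 1 := by
  obtain ⟨v, -, hv0, hv⟩ := exists_norm_eq_succMin_one L
  exact hv ▸ norm_pos_iff.mpr hv0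

theorem sepRad_eq [NeZero d] : sepRad (L : Set (Euc d)) = succMin (d := d) L 1 / 2 := by
  obtain ⟨v, hv, hv0, hnorm⟩ := exists_norm_eq_succMin_one L
  have hleast : IsLeast (norm '' ((L : Set (Euc d)) \ {0})) (succMin (d := d) L 1) := by
    refine ⟨⟨v, ⟨hv, hv0⟩, hnorm⟩, ?_⟩
    rintro _ ⟨w, ⟨hw, hw0⟩, rfl⟩
    exact succMin_one_le_norm hw hw0
  rw [sepRad, hleast.csInf_eq]
  ring

theorem exists_span_inter_closedBall_eq_top :
    ∃ r > 0, Submodule.span ℝ (L ∩ closedBall (0 : Euc d) r) = ⊤ := by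
  obtain ⟨b, hb, hspan, -⟩ := Submodule.exists_fun_fin_finrank_span_eq ℝ (L : Set (Euc d))
  refine ⟨∑ i, ‖b i‖ + 1, by positivity, top_le_iff.mp ?_⟩
  rw [← IsZLattice.span_top (K := ℝ) (L := L)]
  refine hspan.ge.trans (Submodule.span_mono (Set.range_subset_iff.mpr fun i ↦ ⟨hb i, ?_⟩))
  rw [mem_closedBall_zero_iff]
  have := Finset.single_le_sum (fun j _ ↦ norm_nonneg (b j)) (Finset.mem_univ i)
  linarith

theorem span_inter_closedBall_eq_top_of_succMin_lt {r : ℝ} (hr : succMin (d := d) L d < r) :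
    Submodule.span ℝ (L ∩ closedBall (0 : Euc d) r) = ⊤ := by
  obtain ⟨R, hR, hspan⟩ := exists_span_inter_closedBall_eq_top L
  have hne : {t : ℝ | 0 < t ∧
      d ≤ finrank ℝ (Submodule.span ℝ (L ∩ closedBall (0 : Euc d) t))}.Nonempty :=
    ⟨R, hR, by rw [hspan, finrank_top, finrank_euclideanSpace_fin]⟩
  obtain ⟨t, ⟨-, ht⟩, htr⟩ := exists_lt_of_csInf_lt hne hr
  refine Submodule.eq_top_of_finrank_eq (le_antisymm (Submodule.finrank_le _) ?_)
  rw [finrank_euclideanSpace_fin]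
  exact ht.trans (Submodule.finrank_mono (Submodule.span_mono (by gcongr)))

theorem covRad_le_sqrt_mul_succMin : covRad (L : Set (Euc d)) ≤ √d / 2 * succMin (d := d) L d := by
  set M := succMin (d := d) L d
  have hlimit : Filter.Tendsto (fun r ↦ √d / 2 * r) (𝓝[>] M) (𝓝 (√d / 2 * M)) :=
    tendsto_nhdsWithin_of_tendsto_nhds (Continuous.tendsto (by fun_prop) _)
  refine ge_of_tendsto hlimit (eventually_mem_nhdsWithin.mono fun r hr ↦ covRad_le fun x ↦ ?_)
  obtain ⟨u, hu, hxu⟩ := exists_mem_norm_sub_sq_le_of_span_eq_top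
    (span_inter_closedBall_eq_top_of_succMin_lt L hr) x
  have hr0 : 0 ≤ r := (succMin_nonneg _ _).trans (le_of_lt hr)
  refine ⟨u, hu, le_of_sq_le_sq (hxu.trans_eq ?_) (by positivity)⟩
  rw [finrank_euclideanSpace_fin, mul_pow, div_pow, Real.sq_sqrt d.cast_nonneg]
  ring

theorem pow_mul_volume_ball_mul_succMin_le [NeZero d] {s : ℝ} (hs : 0 < s) {p : ℕ}
    (hps : 2 * (p + 1) * s ^ 2 ≤ p) :
    s ^ d * volume.real (ball (0 : Euc d) 1) *
        (succMin (d := d) L 1 ^ (d - 1) * succMin (d := d) L d) ≤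
      p * ZLattice.covolume L := by
  have hpos := succMin_one_pos L
  set M := succMin (d := d) L d
  set c := s ^ d * volume.real (ball (0 : Euc d) 1)
  have hlimit : Filter.Tendsto (fun r ↦ c * (succMin (d := d) L 1 ^ (d - 1) * r)) (𝓝[<] M)
      (𝓝 (c * (succMin (d := d) L 1 ^ (d - 1) * M))) :=
    tendsto_nhdsWithin_of_tendsto_nhds (Continuous.tendsto (by fun_prop) _)
  refine le_of_tendsto hlimit (eventually_mem_nhdsWithin.mono fun r hr ↦ ?_)
  rcases le_or_gt r 0 with hr0 | hr0
  · exact (mul_nonpos_of_nonneg_of_nonpos (by positivity)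
      (mul_nonpos_of_nonneg_of_nonpos (by positivity) hr0)).trans
      (mul_nonneg p.cast_nonneg (ZLattice.covolume_pos L volume).le)
  · simpa [c] using pow_mul_volume_ball_mul_le_of_span_ne_top hpos hr0
      (fun v hv hv0 ↦ succMin_one_le_norm hv hv0)
      (span_inter_closedBall_ne_top_of_lt_succMin hr0 hr) hs hps

end SuccessiveMinima

section Duality

variable {d : ℕ}

theorem one_le_norm_mul_succMin_of_inner_mem_int (L : Submodule ℤ (Euc d)) [DiscreteTopology L]
    [IsZLattice ℝ L] {v : Euc d} (hv : v ≠ 0) (hint : ∀ w ∈ L, ∃ n : ℤ, ⟪v, w⟫ = n) :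
    1 ≤ ‖v‖ * succMin (d := d) L d := by
  set M := succMin (d := d) L d
  have hlimit : Filter.Tendsto (fun r ↦ ‖v‖ * r) (𝓝[>] M) (𝓝 (‖v‖ * M)) :=
    tendsto_nhdsWithin_of_tendsto_nhds (Continuous.tendsto (by fun_prop) _)
  exact ge_of_tendsto hlimit (eventually_mem_nhdsWithin.mono fun r hr ↦
    one_le_norm_mul_of_span_eq_top hv hint (span_inter_closedBall_eq_top_of_succMin_lt L hr))

theorem covRad_dualLat_le (L : Submodule ℤ (Euc d)) [DiscreteTopology L] [IsZLattice ℝ L]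
    [NeZero d] : covRad (dualLat (L : Set (Euc d))) ≤
      √(∑ i ∈ Finset.range d, (4 / 3 : ℝ) ^ i) / (2 * succMin (d := d) L 1) := by
  have hpos := succMin_one_pos L
  refine covRad_le fun x ↦ ?_
  obtain ⟨e, hint, he⟩ := exists_forall_inner_sub_eq_intCast (S := L.toAddSubgroup) hpos
    (fun v hv hv0 ↦ succMin_one_le_norm hv hv0) x
  refine ⟨x - e, hint, le_of_sq_le_sq ?_ (by positivity)⟩
  rw [sub_sub_cancel, div_pow, Real.sq_sqrt (by positivity), mul_pow]
  norm_num at he ⊢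
  exact he

end Duality

section MeshRatio

variable {d : ℕ}

theorem Cd_eq (d : ℕ) [NeZero d] : Cd d = 2 ^ d / volume.real (ball (0 : Euc d) 1) := by
  have hpi : Real.pi ^ ((d : ℝ) / 2) = √Real.pi ^ d := by
    rw [Real.sqrt_eq_rpow, ← Real.rpow_natCast, ← Real.rpow_mul Real.pi_pos.le]
    ring_nf
  have : 0 < Real.Gamma (d / 2 + 1) := Real.Gamma_pos_of_pos (by positivity)
  rw [Cd, measureReal_def, EuclideanSpace.volume_ball, hpi, add_comm (1 : ℝ), Fintype.card_fin,
    ENNReal.ofReal_one, one_pow, one_mul, ENNReal.toReal_ofReal (by positivity)]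
  field_simp

theorem Cd_nonneg (d : ℕ) : 0 ≤ Cd d := by
  have := Real.Gamma_pos_of_pos (by positivity : 0 < 1 + (d : ℝ) / 2)
  rw [Cd]
  positivity

theorem four_mul_geom_sum_four_thirds_le {d : ℕ} (hd : 4 ≤ d) :
    4 * ∑ i ∈ Finset.range d, (4 / 3 : ℝ) ^ i ≤ d ^ 2 * (4 / 3) ^ d := by
  have hd' : (4 : ℝ) ≤ d := by exact_mod_cast hd
  calc 4 * ∑ i ∈ Finset.range d, (4 / 3 : ℝ) ^ i = 12 * ((4 / 3) ^ d - 1) := by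
        rw [geom_sum_eq (by norm_num)]
        ring
    _ ≤ 12 * (4 / 3) ^ d := by linarith
    _ ≤ d ^ 2 * (4 / 3) ^ d := by
        gcongr
        nlinarith

/- Simple packing (`p = 1`, `s = 1 / 2`) suffices in dimension at most three; beyond that, two-fold
packing with `s = 1 / √3` gains a factor `(4 / 3) ^ (d / 2)`, which is the growth rate of the square
root. -/
theorem exists_packing_parameters {d : ℕ} (hd : 1 ≤ d) :
    ∃ s : ℝ, 0 < s ∧ ∃ p : ℕ, 2 * (p + 1) * s ^ 2 ≤ p ∧
      p * √(∑ i ∈ Finset.range d, (4 / 3 : ℝ) ^ i) ≤ d * (2 * s) ^ d := by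
  rcases lt_or_ge d 4 with hd4 | hd4
  · refine ⟨1 / 2, by norm_num, 1, by norm_num, ?_⟩
    rw [Nat.cast_one, one_mul, mul_one_div_cancel two_ne_zero, one_pow, mul_one,
      Real.sqrt_le_left d.cast_nonneg]
    interval_cases d <;> norm_num [Finset.sum_range_succ]
  · have hs : √(1 / 3) ^ 2 = 1 / 3 := Real.sq_sqrt (by norm_num)
    refine ⟨√(1 / 3), by positivity, 2, by rw [hs]; norm_num, le_of_sq_le_sq ?_ (by positivity)⟩
    calc ((2 : ℕ) * √(∑ i ∈ Finset.range d, (4 / 3 : ℝ) ^ i)) ^ 2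
        = 4 * ∑ i ∈ Finset.range d, (4 / 3 : ℝ) ^ i := by
          rw [mul_pow, Real.sq_sqrt (by positivity)]
          norm_num
      _ ≤ d ^ 2 * (4 / 3) ^ d := four_mul_geom_sum_four_thirds_le hd4
      _ = (d * (2 * √(1 / 3)) ^ d) ^ 2 := by
          rw [mul_pow, pow_right_comm, mul_pow 2, hs]
          norm_num

theorem meshRatio_eq (L : Submodule ℤ (Euc d)) [DiscreteTopology L] [IsZLattice ℝ L] [NeZero d] :
    meshRatio (L : Set (Euc d)) = 2 * covRad (L : Set (Euc d)) / succMin (d := d) L 1 := by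
  rw [meshRatio, sepRad_eq, div_div_eq_mul_div, mul_comm]

theorem mul_succMin_div_succMin_one_le (L : Submodule ℤ (Euc d)) [DiscreteTopology L]
    [IsZLattice ℝ L] [NeZero d] {s : ℝ} (hs : 0 < s) {p : ℕ} (hps : 2 * (p + 1) * s ^ 2 ≤ p)
    {A B : ℝ} (hA : 0 ≤ A) (hAB : p * A ≤ B * (2 * s) ^ d) :
    A * succMin (d := d) L d / succMin (d := d) L 1 ≤
      Cd d * (B * ZLattice.covolume L / succMin (d := d) L 1 ^ d) := by
  have hpos := succMin_one_pos L
  have hcov := ZLattice.covolume_pos L volume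
  have hminkowski := pow_mul_volume_ball_mul_succMin_le L hs hps
  rw [Cd_eq]
  set V := volume.real (ball (0 : Euc d) 1)
  have hV : 0 < V := ENNReal.toReal_pos (measure_ball_pos _ _ one_pos).ne' measure_ball_lt_top.ne
  set l := succMin (d := d) L 1
  set M := succMin (d := d) L d
  set covol := ZLattice.covolume L
  calc A * M / l = A * (s ^ d * V * (l ^ (d - 1) * M)) / (s ^ d * V * l ^ d) := by
        rw [← mul_pow_sub_one (NeZero.ne d) l]
        field_simp
    _ ≤ A * (p * covol) / (s ^ d * V * l ^ d) := by gcongr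
    _ = p * A * covol / (s ^ d * V * l ^ d) := by ring
    _ ≤ B * (2 * s) ^ d * covol / (s ^ d * V * l ^ d) := by gcongr
    _ = 2 ^ d / V * (B * covol / l ^ d) := by
        rw [mul_pow]
        field_simp

variable {Λ : Set (Euc d)} {T : Matrix (Fin d) (Fin d) ℝ} [NeZero d]

theorem IsLatticeOf.one_le_succMin_dualLat_one_mul_succMin (hT : IsLatticeOf Λ T) :
    1 ≤ succMin (dualLat Λ) 1 * succMin Λ d := by
  obtain ⟨b, hΛ, -⟩ := hT.exists_basis
  obtain ⟨b', hdual, -⟩ := hT.dual.exists_basis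
  obtain ⟨v, hv, hv0, hnorm⟩ := exists_norm_eq_succMin_one (Submodule.span ℤ (Set.range b'))
  rw [← SetLike.mem_coe, ← hdual] at hv
  rw [hdual, ← hnorm, hΛ]
  exact one_le_norm_mul_succMin_of_inner_mem_int _ hv0 fun w hw ↦
    real_inner_comm v w ▸ hv w (hΛ ▸ hw)

theorem IsLatticeOf.meshRatio_dualLat_le_geom_sum (hT : IsLatticeOf Λ T) :
    meshRatio (dualLat Λ) ≤
      √(∑ i ∈ Finset.range d, (4 / 3 : ℝ) ^ i) * succMin Λ d / succMin Λ 1 := by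
  have htransfer := hT.one_le_succMin_dualLat_one_mul_succMin
  obtain ⟨b, rfl, -⟩ := hT.exists_basis
  obtain ⟨b', hdual, -⟩ := hT.dual.exists_basis
  set L := Submodule.span ℤ (Set.range b)
  set L' := Submodule.span ℤ (Set.range b')
  have hcov := covRad_dualLat_le L
  have hpos := succMin_one_pos L
  rw [hdual] at htransfer hcov ⊢
  rw [meshRatio_eq, div_le_iff₀ (succMin_one_pos L')]
  set σ := √(∑ i ∈ Finset.range d, (4 / 3 : ℝ) ^ i)
  calc 2 * covRad (L' : Set (Euc d)) ≤ 2 * (σ / (2 * succMin (d := d) L 1)) := by gcongr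
    _ = σ / succMin (d := d) L 1 * 1 := by field_simp
    _ ≤ σ / succMin (d := d) L 1 * (succMin (d := d) L' 1 * succMin (d := d) L d) := by gcongr
    _ = σ * succMin (d := d) L d / succMin (d := d) L 1 * succMin (d := d) L' 1 := by ring

theorem IsLatticeOf.meshRatio_le (hT : IsLatticeOf Λ T) :
    meshRatio Λ ≤ Cd d * (√d * |T.det| / succMin Λ 1 ^ d) := by
  obtain ⟨b, rfl, hdet⟩ := hT.exists_basis
  set L := Submodule.span ℤ (Set.range b)
  have hpos := succMin_one_pos L
  calc meshRatio (L : Set (Euc d)) = 2 * covRad (L : Set (Euc d)) / succMin (d := d) L 1 :=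
        meshRatio_eq L
    _ ≤ 2 * (√d / 2 * succMin (d := d) L d) / succMin (d := d) L 1 := by
        gcongr
        exact covRad_le_sqrt_mul_succMin L
    _ = √d * succMin (d := d) L d / succMin (d := d) L 1 := by ring
    _ ≤ Cd d * (√d * |T.det| / succMin (d := d) L 1 ^ d) :=
        hdet ▸ mul_succMin_div_succMin_one_le L (s := 1 / 2) (p := 1) (by norm_num) (by norm_num)
          (Real.sqrt_nonneg _) (by simp)

theorem IsLatticeOf.meshRatio_dualLat_le (hT : IsLatticeOf Λ T) :
    meshRatio (dualLat Λ) ≤ Cd d * (d * |T.det| / succMin Λ 1 ^ d) := by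
  refine hT.meshRatio_dualLat_le_geom_sum.trans ?_
  obtain ⟨b, rfl, hdet⟩ := hT.exists_basis
  obtain ⟨s, hs, p, hps, hsum⟩ := exists_packing_parameters (NeZero.one_le (n := d))
  exact hdet ▸ mul_succMin_div_succMin_one_le _ hs hps (Real.sqrt_nonneg _) hsum

end MeshRatio

theorem stmt0 {d : ℕ} (hd : 1 ≤ d) (Λ : Set (Euc d)) (T : Matrix (Fin d) (Fin d) ℝ)
    (hT : IsLatticeOf Λ T) :
    meshRatio Λ ≤ Cd d * min
      (Real.sqrt d * |T.det| / (succMin Λ 1) ^ d)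
      (d * |T⁻¹.det| / (succMin (dualLat Λ) 1) ^ d) := by
  have : NeZero d := ⟨by omega⟩
  have hdual := hT.dual.meshRatio_dualLat_le
  rw [hT.dualLat_dualLat, Matrix.det_transpose] at hdual
  rw [mul_min_of_nonneg _ _ (Cd_nonneg d)]
  exact le_min hT.meshRatio_le hdual

end
end

section
/- Let Λ ⊂ ℝ^d be a full-rank lattice, let Δ ∈ ℝ^d be any fixed shift, and let P_Δ = (Λ + Δ) ∩ [0,1)^d contain at least 2 points. Then the mesh ratio of P_Δ with respect to [0,1]^d satisfies ρ(P_Δ) ≤ 2√d · ρ(Λ) if h(Λ) ≥ 1/2, and ρ(P_Δ) ≤ (1+√d) · ρ(Λ) if h(Λ) < 1/2. -/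
open scoped RealInnerProductSpace

noncomputable section

/-!
A subset of a translate of `Λ` is at least as separated as `Λ`, so only the covering radius of `P_Δ`
has to be bounded. If `h(Λ) ≥ 1/2`, the diameter `√d` of the cube is at most `2√d · h(Λ)`.
If `h(Λ) < r < 1/2`, contract the cube towards its centre by the factor `1 - 2r`. This moves each
point `x` by at most `2r · √d/2`, and by convexity the ball of radius `r` about its image `z` stays
inside the cube. The shifted lattice meets that ball, so `x` is within `√d · r + r` of `P_Δ`;
let `r → h(Λ)`.
-/

open Metric AffineMap

section Convex

variable {E : Type*} [SeminormedAddCommGroup E] [NormedSpace ℝ E] {K Λ : Set E} {c x : E}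
  {D R h r t : ℝ}

lemma ball_lineMap_subset_interior (hK : Convex ℝ K) (hR : ball c R ⊆ K) (hx : x ∈ closure K)
    (ht : t ∈ Set.Ioc 0 1) : ball (lineMap x c t) (t * R) ⊆ interior K := by
  intro y hy
  -- `y` lies between `x` and a point of `ball c R`, namely its preimage under `lineMap x · t`.
  have hpreimage : x + t⁻¹ • (y - x) ∈ ball c R := by
    have hsub : t • (x + t⁻¹ • (y - x) - c) = y - lineMap x c t := by
      rw [lineMap_apply_module, smul_sub, smul_add, smul_inv_smul₀ ht.1.ne']
      module
    have hlt : t * ‖x + t⁻¹ • (y - x) - c‖ < t * R :=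
      calc t * ‖x + t⁻¹ • (y - x) - c‖ = ‖y - lineMap x c t‖ := by
            rw [← hsub, norm_smul, Real.norm_of_nonneg ht.1.le]
        _ < t * R := mem_ball_iff_norm.1 hy
    exact mem_ball_iff_norm.2 (lt_of_mul_lt_mul_left hlt ht.1.le)
  have hinterior := interior_maximal hR isOpen_ball hpreimage
  simpa [smul_inv_smul₀ ht.1.ne'] using hK.add_smul_mem_interior' hx hinterior ht

lemma infDist_inter_le_of_lt (hK : Convex ℝ K) (hR : ball c R ⊆ K) (hD : K ⊆ closedBall c D)
    (hΛ : Λ.Nonempty) (hh : ∀ z, infDist z Λ ≤ h) (hx : x ∈ closure K) (hhr : h < r)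
    (hrR : r ≤ R) : infDist x (Λ ∩ K) ≤ (1 + D / R) * r := by
  have hr : 0 < r := (infDist_nonneg.trans (hh x)).trans_lt hhr
  have hR₀ : 0 < R := hr.trans_le hrR
  have ht : r / R ∈ Set.Ioc 0 1 := ⟨by positivity, (div_le_one hR₀).2 hrR⟩
  have hxc : dist x c ≤ D := closure_minimal hD isClosed_closedBall hx
  obtain ⟨y, hyΛ, hzy⟩ := (infDist_lt_iff hΛ).1 ((hh (lineMap x c (r / R))).trans_lt hhr)
  have hyK : y ∈ K := interior_subset <| ball_lineMap_subset_interior hK hR hx ht <| by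
    rwa [div_mul_cancel₀ r hR₀.ne', mem_ball']
  calc infDist x (Λ ∩ K) ≤ dist x y := infDist_le_dist_of_mem ⟨hyΛ, hyK⟩
    _ ≤ dist x (lineMap x c (r / R)) + dist (lineMap x c (r / R)) y := dist_triangle ..
    _ ≤ r / R * D + r := by
      rw [dist_left_lineMap, Real.norm_of_nonneg ht.1.le]
      have := ht.1.le
      gcongr
    _ = (1 + D / R) * r := by ring

lemma infDist_inter_le (hK : Convex ℝ K) (hR : ball c R ⊆ K) (hD : K ⊆ closedBall c D)
    (hΛ : Λ.Nonempty) (hh : ∀ z, infDist z Λ ≤ h) (hx : x ∈ closure K) (hhR : h < R) :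
    infDist x (Λ ∩ K) ≤ (1 + D / R) * h := by
  have hlim : Filter.Tendsto (fun r ↦ (1 + D / R) * r) (nhdsWithin h (Set.Ioi h))
      (nhds ((1 + D / R) * h)) :=
    ((continuous_const_mul (1 + D / R)).tendsto h).mono_left nhdsWithin_le_nhds
  refine ge_of_tendsto hlim ?_
  filter_upwards [Ioo_mem_nhdsGT hhR] with r hr
  exact infDist_inter_le_of_lt hK hR hD hΛ hh hx hr.1 hr.2.le

end Convex

lemma infDist_image_add_right {E : Type*} [SeminormedAddCommGroup E] (s : Set E) (a x : E) :
    infDist x ((· + a) '' s) = infDist (x - a) s := by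
  simpa using infDist_image (isometry_add_right a) (t := s) (x := x - a)

lemma infDist_span_int_range_le {ι E : Type*} [Fintype ι] [NormedAddCommGroup E]
    [NormedSpace ℝ E] (b : Module.Basis ι ℝ E) (x : E) :
    infDist x (Submodule.span ℤ (Set.range b) : Set E) ≤ ∑ i, ‖b i‖ :=
  calc infDist x (Submodule.span ℤ (Set.range b) : Set E)
      ≤ dist x (ZSpan.floor b x) := infDist_le_dist_of_mem (ZSpan.floor b x).2
    _ = ‖ZSpan.fract b x‖ := by rw [dist_eq_norm, ZSpan.fract_apply]
    _ ≤ ∑ i, ‖b i‖ := ZSpan.norm_fract_le b x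

lemma dist_le_sqrt_card_mul {ι : Type*} [Fintype ι] {β : ι → Type*}
    [∀ i, PseudoMetricSpace (β i)] {x y : PiLp 2 β} {r : ℝ} (hr : 0 ≤ r)
    (h : ∀ i, dist (x i) (y i) ≤ r) : dist x y ≤ √(Fintype.card ι) * r :=
  calc dist x y ≤ √(Fintype.card ι) * dist x.ofLp y.ofLp := by
        simpa [Real.sqrt_eq_rpow] using (PiLp.antilipschitzWith_ofLp 2 β).le_mul_dist x y
    _ ≤ √(Fintype.card ι) * r := by gcongr; exact (dist_pi_le_iff hr).2 h

section Cube

variable {d : ℕ}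

/-- The centre `(1/2, …, 1/2)` of the unit cube, towards which the cube is contracted. -/
def cubeCenter (d : ℕ) : Euc d := WithLp.toLp 2 fun _ ↦ 1 / 2

lemma halfOpenCube_eq_preimage_pi :
    halfOpenCube d = PiLp.continuousLinearEquiv 2 ℝ (fun _ : Fin d ↦ ℝ) ⁻¹'
      Set.univ.pi fun _ ↦ Set.Ico 0 1 := by
  ext x
  simp [halfOpenCube]

lemma convex_halfOpenCube : Convex ℝ (halfOpenCube d) := by
  rw [halfOpenCube_eq_preimage_pi]
  exact (convex_pi fun _ _ ↦ convex_Ico 0 1).linear_preimage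
    (PiLp.continuousLinearEquiv 2 ℝ fun _ : Fin d ↦ ℝ).toLinearMap

lemma closure_halfOpenCube : closure (halfOpenCube d) = unitCube d := by
  rw [halfOpenCube_eq_preimage_pi, ← ContinuousLinearEquiv.preimage_closure, closure_pi_set,
    closure_Ico zero_ne_one]
  ext x
  simp [unitCube, Pi.le_def, forall_and]

lemma halfOpenCube_subset_unitCube : halfOpenCube d ⊆ unitCube d :=
  closure_halfOpenCube (d := d) ▸ subset_closure

lemma ball_cubeCenter_subset_halfOpenCube : ball (cubeCenter d) (1 / 2) ⊆ halfOpenCube d := by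
  intro x hx i
  have hi : |x i - 1 / 2| < 1 / 2 := (PiLp.dist_apply_le x (cubeCenter d) i).trans_lt hx
  rw [abs_lt] at hi
  constructor <;> linarith

lemma unitCube_subset_closedBall_cubeCenter :
    unitCube d ⊆ closedBall (cubeCenter d) (√d / 2) := by
  intro x hx
  have hdist : dist x (cubeCenter d) ≤ √(Fintype.card (Fin d)) * (1 / 2) :=
    dist_le_sqrt_card_mul one_half_pos.le fun i ↦ by
      change |x i - 1 / 2| ≤ 1 / 2
      rw [abs_le]
      constructor <;> linarith [hx i]
  rwa [Fintype.card_fin, mul_one_div] at hdist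

end Cube

section Radii

variable {d : ℕ} {Λ P : Set (Euc d)}

lemma covRad_eq_iSup_infDist : covRad Λ = ⨆ x, infDist x Λ := by
  simp only [covRad, infDist_eq_iInf, sInf_image']

lemma covRad_nonneg : 0 ≤ covRad Λ :=
  covRad_eq_iSup_infDist (Λ := Λ) ▸ Real.iSup_nonneg fun _ ↦ infDist_nonneg

lemma covRadCube_le {a : ℝ} (h : ∀ x ∈ unitCube d, infDist x P ≤ a) : covRadCube P ≤ a := by
  have : Nonempty (unitCube d) := ⟨0, by simp [unitCube]⟩
  simp only [covRadCube, sInf_image', ← infDist_eq_iInf]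
  exact ciSup_le fun x ↦ h x x.2

lemma covRadCube_le_sqrt (hP : (P ∩ unitCube d).Nonempty) : covRadCube P ≤ √d := by
  obtain ⟨p, hpP, hp⟩ := hP
  refine covRadCube_le fun x hx ↦ ?_
  calc infDist x P ≤ dist x p := infDist_le_dist_of_mem hpP
    _ ≤ dist x (cubeCenter d) + dist p (cubeCenter d) := dist_triangle_right ..
    _ ≤ √d / 2 + √d / 2 := add_le_add (unitCube_subset_closedBall_cubeCenter hx)
      (unitCube_subset_closedBall_cubeCenter hp)
    _ = √d := add_halves _

lemma covRadCube_inter_halfOpenCube_le {h : ℝ} (hΛ : Λ.Nonempty) (hh : ∀ z, infDist z Λ ≤ h)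
    (h_lt : h < 1 / 2) : covRadCube (Λ ∩ halfOpenCube d) ≤ (1 + √d) * h := by
  refine covRadCube_le fun x hx ↦ ?_
  have hbound := infDist_inter_le convex_halfOpenCube ball_cubeCenter_subset_halfOpenCube
    (halfOpenCube_subset_unitCube.trans unitCube_subset_closedBall_cubeCenter) hΛ hh
    (closure_halfOpenCube.symm ▸ hx) h_lt
  rwa [div_div_div_cancel_right₀ two_ne_zero, div_one] at hbound

lemma sepRad_pos {L : AddSubgroup (Euc d)} [DiscreteTopology L]
    (hL : ((L : Set (Euc d)) \ {0}).Nonempty) : 0 < sepRad (L : Set (Euc d)) := by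
  obtain ⟨ε, hε, hball⟩ :=
    exists_ball_inter_eq_singleton_of_mem_discrete (s := (L : Set (Euc d))) ⟨‹_›⟩ L.zero_mem
  suffices ε ≤ sInf (norm '' ((L : Set (Euc d)) \ {0})) from
    mul_pos one_half_pos (hε.trans_le this)
  refine le_csInf (hL.image _) ?_
  rintro _ ⟨v, ⟨hvL, hv⟩, rfl⟩
  by_contra! hlt
  exact hv (hball.subset ⟨mem_ball_zero_iff.2 hlt, hvL⟩)

lemma sepRad_le_sepRadSet (hP : P.Nontrivial) (hsub : ∀ x ∈ P, ∀ y ∈ P, x - y ∈ Λ) :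
    sepRad Λ ≤ sepRadSet P := by
  obtain ⟨p, hp, q, hq, hpq⟩ := hP
  refine mul_le_mul_of_nonneg_left (le_csInf ⟨_, p, hp, q, hq, hpq, rfl⟩ ?_) one_half_pos.le
  rintro _ ⟨x, hx, y, hy, hxy, rfl⟩
  have hbdd : BddBelow (norm '' (Λ \ {0})) := ⟨0, by rintro _ ⟨v, -, rfl⟩; exact norm_nonneg v⟩
  exact csInf_le hbdd ⟨x - y, ⟨hsub x hx y hy, sub_ne_zero.2 hxy⟩, (dist_eq_norm x y).symm⟩

end Radii

namespace IsLatticeOf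

variable {d : ℕ} {Λ : Set (Euc d)} {T : Matrix (Fin d) (Fin d) ℝ}

lemma exists_basis_s6 (hT : IsLatticeOf Λ T) :
    ∃ b : Module.Basis (Fin d) ℝ (Euc d), Λ = Submodule.span ℤ (Set.range b) := by
  obtain ⟨hdet, rfl⟩ := hT
  let e := (EuclideanSpace.basisFun (Fin d) ℝ).toBasis
  refine ⟨e.map (Matrix.toLinearEquiv e T hdet), ?_⟩
  have hcolumn (i j : Fin d) : e.map (Matrix.toLinearEquiv e T hdet) j i = T i j := by
    rw [Module.Basis.map_apply, Matrix.toLinearEquiv_apply, Matrix.toLin_self]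
    simp [e, Pi.single_apply]
  ext v
  rw [SetLike.mem_coe, Submodule.mem_span_range_iff_exists_fun]
  refine exists_congr fun k ↦ ?_
  rw [PiLp.ext_iff]
  refine forall_congr' fun i ↦ ?_
  simp only [WithLp.ofLp_sum, Finset.sum_apply, PiLp.smul_apply, hcolumn, zsmul_eq_mul,
    mul_comm (T i _), eq_comm]

lemma infDist_image_add_right_le_covRad (hT : IsLatticeOf Λ T) (Δ x : Euc d) :
    infDist x ((· + Δ) '' Λ) ≤ covRad Λ := by
  obtain ⟨b, rfl⟩ := hT.exists_basis_s6
  rw [infDist_image_add_right, covRad_eq_iSup_infDist]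
  refine le_ciSup (f := fun z ↦ infDist z _) ⟨∑ i, ‖b i‖, ?_⟩ (x - Δ)
  rintro _ ⟨z, rfl⟩
  exact infDist_span_int_range_le b z

lemma meshRatioSet_le_mul_meshRatio (hT : IsLatticeOf Λ T) {Δ : Euc d} {P : Set (Euc d)}
    (hPΛ : P ⊆ (· + Δ) '' Λ) (hP : P.Nontrivial) {C : ℝ} (hC : 0 ≤ C)
    (hcov : covRadCube P ≤ C * covRad Λ) : meshRatioSet P ≤ C * meshRatio Λ := by
  obtain ⟨b, rfl⟩ := hT.exists_basis_s6
  set L := (Submodule.span ℤ (Set.range b)).toAddSubgroup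
  have hsub : ∀ x ∈ P, ∀ y ∈ P, x - y ∈ L := by
    intro x hx y hy
    obtain ⟨u, hu, rfl⟩ := hPΛ hx
    obtain ⟨v, hv, rfl⟩ := hPΛ hy
    simpa only [add_sub_add_right_eq_sub] using L.sub_mem hu hv
  have hpos : 0 < sepRad (L : Set (Euc d)) := by
    obtain ⟨p, hp, q, hq, hpq⟩ := hP
    exact sepRad_pos ⟨p - q, hsub p hp q hq, sub_ne_zero.2 hpq⟩
  rw [meshRatioSet, meshRatio, ← mul_div_assoc]
  exact div_le_div₀ (mul_nonneg hC covRad_nonneg) hcov hpos (sepRad_le_sepRadSet hP hsub)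

end IsLatticeOf

theorem stmt6 {d : ℕ} (Λ : Set (Euc d)) (T : Matrix (Fin d) (Fin d) ℝ)
    (hT : IsLatticeOf Λ T) (Δ : Euc d)
    (hP : (((· + Δ) '' Λ) ∩ halfOpenCube d).Nontrivial) :
    (1 / 2 ≤ covRad Λ →
      meshRatioSet (((· + Δ) '' Λ) ∩ halfOpenCube d) ≤ 2 * Real.sqrt d * meshRatio Λ) ∧
    (covRad Λ < 1 / 2 →
      meshRatioSet (((· + Δ) '' Λ) ∩ halfOpenCube d) ≤ (1 + Real.sqrt d) * meshRatio Λ) := by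
  have hmesh {C : ℝ} := hT.meshRatioSet_le_mul_meshRatio Set.inter_subset_left hP (C := C)
  constructor <;> intro hcov
  · have hcube : covRadCube ((· + Δ) '' Λ ∩ halfOpenCube d) ≤ √d :=
      covRadCube_le_sqrt <| hP.nonempty.mono <|
        Set.subset_inter subset_rfl (Set.inter_subset_right.trans halfOpenCube_subset_unitCube)
    refine hmesh (by positivity) (hcube.trans ?_)
    nlinarith [Real.sqrt_nonneg d]
  · exact hmesh (by positivity) <|
      covRadCube_inter_halfOpenCube_le (hP.nonempty.mono Set.inter_subset_left)
        (hT.infDist_image_add_right_le_covRad Δ) hcov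

end
end
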